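/- With Γ as above and M = Γ(∧^{2r} g) ⊂ S^r(g): an element x ∈ g is singular if and only if f(x) = 0 for all f ∈ M. In particular M is contained in the ideal of polynomials vanishing on Sing g. -/

import Mathlib

open Module

/-- The value at `x` of `Γ(w₁ ∧ ⋯ ∧ w_{2r})`, the sum over perfect matchings `ν` of
`{1, …, 2r}` of `∏ᵢ B([w_{ν(2i-1)}, w_{ν(2i)}], x)` (`B` the Killing form), written as
the average over all of `Σ_{2r}` with signs (each matching class has `r! 2^r`
permutations, on which the signed summand is constant). -/
noncomputable def GammaVal {L : Type*} [LieRing L] [LieAlgebra ℂ L]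
    [Module.Finite ℂ L] (r : ℕ) (w : Fin (2 * r) → L) (x : L) : ℂ :=
  (1 / ((Nat.factorial r : ℂ) * 2 ^ r)) *
    ∑ σ : Equiv.Perm (Fin (2 * r)), ((Equiv.Perm.sign σ : ℤ) : ℂ) *
      ∏ i : Fin r,
        killingForm ℂ L
          ⁅w (σ ⟨2 * i.1, by have := i.isLt; omega⟩),
            w (σ ⟨2 * i.1 + 1, by have := i.isLt; omega⟩)⁆ x

/-!
Up to the factor `r! 2^r`, the number `Γ(w₁ ∧ ⋯ ∧ w_{2r})(x)` is the alternatization of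
`∏ i, B(w_{2i-1}, w_{2i})` for the Kirillov form `B(u, v) = κ([u, v], x)`, that is, the `r`-th
exterior power of the two-form `B`. Such a power vanishes identically if and only if `B` has rank
less than `2r`. In smaller rank, some `w_j` can be replaced by a linear combination of all the
`w_k` that lies in the radical of `B`, which only rescales the value by a nonzero factor. In rank at
least `2r` there are `r` orthogonal hyperbolic pairs, on which every term of the alternatization is
`0` or `1` and the identity permutation contributes `1`. Since `κ` is nondegenerate, the radical of
`B` is the centralizer of `x`, so `B` has rank `dim g - dim g^x`.
-/

open Equiv Function

section Alternating

variable {R M N κ : Type*} [CommRing R] [AddCommGroup M] [Module R M]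
  [AddCommGroup N] [Module R N] [Fintype κ] [DecidableEq κ]

theorem alternatingMap_update_sum_smul (f : M [⋀^κ]→ₗ[R] N) (w : κ → M) (c : κ → R) (j : κ) :
    f (update w j (∑ k, c k • w k)) = c j • f w := by
  rw [f.map_update_sum, Finset.sum_eq_single_of_mem j (Finset.mem_univ j),
    f.map_update_smul, update_eq_self]
  intro k _ hk
  rw [f.map_update_smul, f.map_update_self w hk.symm, smul_zero]

end Alternating

theorem exists_eq_prodCongrRight_trans_prodCongrLeft {ι α : Type*} [Finite ι] [Finite α]
    [Nonempty α] (σ : Perm (ι × α)) (hσ : ∀ i a b, (σ (i, a)).1 = (σ (i, b)).1) :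
    ∃ (ρ : ι → Perm α) (τ : Perm ι), σ = (prodCongrRight ρ).trans (prodCongrLeft fun _ => τ) := by
  obtain ⟨o⟩ := ‹Nonempty α›
  have hsurj : Surjective fun i => (σ (i, o)).1 := fun i => by
    obtain ⟨⟨j, a⟩, hj⟩ := σ.surjective (i, o)
    exact ⟨j, by simp only [hσ j o a, hj]⟩
  have hinj (i : ι) : Injective fun a => (σ (i, a)).2 := fun a b hab =>
    (Prod.mk.inj (σ.injective (Prod.ext (hσ i a b) hab))).2
  exact ⟨fun i => ofBijective _ (Finite.injective_iff_bijective.mp (hinj i)),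
    ofBijective _ (Finite.surjective_iff_bijective.mp hsurj),
    Equiv.ext fun ⟨i, a⟩ => Prod.ext (hσ i a o) rfl⟩

section MatchingProd

variable {R M ι : Type*} [CommRing R] [AddCommGroup M] [Module R M] [Fintype ι]

theorem prod_apply_update_eq_mul_prod_compl [DecidableEq ι] (B : M →ₗ[R] M →ₗ[R] R)
    (w : ι × Fin 2 → M) (i : ι) (a : Fin 2) (z : M) :
    ∏ j, B (update w (i, a) z (j, 0)) (update w (i, a) z (j, 1)) =
      B (update w (i, a) z (i, 0)) (update w (i, a) z (i, 1)) *
        ∏ j ∈ {i}ᶜ, B (w (j, 0)) (w (j, 1)) := by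
  rw [Fintype.prod_eq_mul_prod_compl i]
  congr 1
  refine Finset.prod_congr rfl fun j hj => ?_
  have hji : j ≠ i := by simpa using hj
  simp [hji]

/-- The contribution `∏ i, B (w (i, 0)) (w (i, 1))` of the standard perfect matching of
`ι × Fin 2`, which pairs `(i, 0)` with `(i, 1)`, as a multilinear map in `w`. For
alternating `B`, its alternatization is the signed sum over all perfect matchings, each counted
`r! * 2 ^ r` times with `r = card ι`. -/
def matchingProd (B : M →ₗ[R] M →ₗ[R] R) : MultilinearMap R (fun _ : ι × Fin 2 => M) R where
  toFun w := ∏ i, B (w (i, 0)) (w (i, 1))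
  map_update_add' := by
    classical
    rintro inst w ⟨i, a⟩ x y
    rw [Subsingleton.elim inst instDecidableEqProd]
    simp only [prod_apply_update_eq_mul_prod_compl]
    fin_cases a <;> simp [add_mul]
  map_update_smul' := by
    classical
    rintro inst w ⟨i, a⟩ c x
    rw [Subsingleton.elim inst instDecidableEqProd]
    simp only [prod_apply_update_eq_mul_prod_compl]
    fin_cases a <;> simp [mul_assoc]

variable [DecidableEq ι] {B : M →ₗ[R] M →ₗ[R] R}

theorem alternatization_matchingProd_apply (w : ι × Fin 2 → M) :
    (matchingProd B).alternatization w =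
      ∑ σ : Perm (ι × Fin 2), Perm.sign σ • ∏ i, B (w (σ (i, 0))) (w (σ (i, 1))) :=
  MultilinearMap.alternatization_apply ..

theorem alternatization_matchingProd_eq_zero_of_apply_eq_zero (hB : B.IsAlt) {w : ι × Fin 2 → M}
    {k : ι × Fin 2} (hk : B (w k) = 0) : (matchingProd B).alternatization w = 0 := by
  have hk' (x : M) : B x (w k) = 0 := hB.eq_iff.mp (by rw [hk, LinearMap.zero_apply])
  rw [alternatization_matchingProd_apply]
  refine Finset.sum_eq_zero fun σ _ => ?_
  obtain ⟨⟨i, a⟩, rfl⟩ := σ.surjective k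
  rw [Finset.prod_eq_zero (Finset.mem_univ i), smul_zero]
  fin_cases a
  · exact DFunLike.congr_fun hk _
  · exact hk' _

end MatchingProd

section Hyperbolic

variable {R M ι : Type*} [CommRing R] [AddCommGroup M] [Module R M]

/-- Pairwise orthogonal hyperbolic pairs `(w (i, 0), w (i, 1))` for the bilinear form `B`: for
alternating `B`, a symplectic basis of the span of `w`. -/
structure IsHyperbolicFamily (B : M →ₗ[R] M →ₗ[R] R) (w : ι × Fin 2 → M) : Prop where
  apply_eq_zero : ∀ ⦃i j : ι⦄, i ≠ j → ∀ a b, B (w (i, a)) (w (j, b)) = 0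
  apply_eq_one : ∀ i, B (w (i, 0)) (w (i, 1)) = 1

namespace IsHyperbolicFamily

variable {B : M →ₗ[R] M →ₗ[R] R} {w : ι × Fin 2 → M}

theorem apply_perm_eq_sign (hw : IsHyperbolicFamily B w) (hB : B.IsAlt) (i : ι)
    (π : Perm (Fin 2)) : B (w (i, π 0)) (w (i, π 1)) = ((Perm.sign π : ℤ) : R) := by
  obtain rfl | rfl : π = 1 ∨ π = swap 0 1 := by revert π; decide
  · simp [hw.apply_eq_one]
  · simp [← hB.neg (w (i, 0)), hw.apply_eq_one]

variable [Fintype ι] [DecidableEq ι]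

/- A nonzero term comes from a `σ` that permutes the pairs, up to a swap inside each of them. The
permutation of the pairs is even on `ι × Fin 2`, and each swap changes the sign of one factor. -/
theorem sign_smul_prod_eq_one (hw : IsHyperbolicFamily B w) (hB : B.IsAlt)
    {σ : Perm (ι × Fin 2)} (hσ : ∏ i, B (w (σ (i, 0))) (w (σ (i, 1))) ≠ 0) :
    Perm.sign σ • ∏ i, B (w (σ (i, 0))) (w (σ (i, 1))) = 1 := by
  have hfst (i : ι) : (σ (i, 0)).1 = (σ (i, 1)).1 := by
    by_contra hne
    exact hσ (Finset.prod_eq_zero (Finset.mem_univ i) (hw.apply_eq_zero hne _ _))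
  obtain ⟨ρ, τ, rfl⟩ := exists_eq_prodCongrRight_trans_prodCongrLeft σ fun i => by
    simp [Fin.forall_fin_two, hfst]
  have hsign : Perm.sign ((prodCongrRight ρ).trans (prodCongrLeft fun _ : Fin 2 => τ)) =
      ∏ i, Perm.sign (ρ i) := by
    rw [Perm.sign_trans, Perm.sign_prodCongrRight, Perm.sign_prodCongrLeft, Fin.prod_const,
      Int.units_sq, one_mul]
  simp only [hsign, trans_apply, prodCongrRight_apply, prodCongrLeft_apply,
    hw.apply_perm_eq_sign hB, Units.smul_def, zsmul_eq_mul]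
  norm_cast
  rw [← Finset.prod_mul_distrib, Finset.prod_eq_one fun i _ => Int.units_mul_self _]
  simp

open scoped Classical in
theorem alternatization_matchingProd_eq_card (hw : IsHyperbolicFamily B w) (hB : B.IsAlt) :
    (matchingProd B).alternatization w =
      Finset.card {σ : Perm (ι × Fin 2) | ∏ i, B (w (σ (i, 0))) (w (σ (i, 1))) ≠ 0} := by
  rw [alternatization_matchingProd_apply, ← Finset.sum_boole]
  refine Finset.sum_congr rfl fun σ _ => ?_
  split_ifs with hσ
  · exact hw.sign_smul_prod_eq_one hB hσ
  · rw [not_not.mp hσ, smul_zero]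

theorem alternatization_matchingProd_ne_zero [CharZero R] (hw : IsHyperbolicFamily B w)
    (hB : B.IsAlt) : (matchingProd B).alternatization w ≠ 0 := by
  classical
  rw [hw.alternatization_matchingProd_eq_card hB, Nat.cast_ne_zero]
  exact Finset.card_ne_zero_of_mem (a := 1) (by simp [hw.apply_eq_one])

end IsHyperbolicFamily

/-- The map `x ↦ x - B x q • p + B x p • q`: for `B` alternating with `B p q = 1`, the projection
onto the orthogonal complement of the hyperbolic plane spanned by `p` and `q`. -/
def hyperbolicProj (B : M →ₗ[R] M →ₗ[R] R) (p q : M) : M →ₗ[R] M :=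
  LinearMap.id - (B.flip q).smulRight p + (B.flip p).smulRight q

theorem hyperbolicProj_apply (B : M →ₗ[R] M →ₗ[R] R) (p q x : M) :
    hyperbolicProj B p q x = x - B x q • p + B x p • q := rfl

variable {B : M →ₗ[R] M →ₗ[R] R} {p q : M}

theorem apply_left_hyperbolicProj (hB : B.IsAlt) (hpq : B p q = 1) (x : M) :
    B p (hyperbolicProj B p q x) = 0 := by
  simp [hyperbolicProj_apply, hpq, hB.self_eq_zero p, ← hB.neg x p]

theorem apply_right_hyperbolicProj (hB : B.IsAlt) (hpq : B p q = 1) (x : M) :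
    B q (hyperbolicProj B p q x) = 0 := by
  simp [hyperbolicProj_apply, ← hB.neg p q, hpq, hB.self_eq_zero q, ← hB.neg x q]

theorem eq_compl₁₂_hyperbolicProj_add (hB : B.IsAlt) (hpq : B p q = 1) (x : M) :
    B x = B.compl₁₂ (hyperbolicProj B p q) (hyperbolicProj B p q) x +
      (B x q • B p - B x p • B q) := by
  ext y
  have hp := hB.eq_iff.mp (apply_left_hyperbolicProj hB hpq x)
  have hq := hB.eq_iff.mp (apply_right_hyperbolicProj hB hpq x)
  have hy : B (hyperbolicProj B p q x) (hyperbolicProj B p q y) = B (hyperbolicProj B p q x) y := by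
    rw [hyperbolicProj_apply B p q y]
    simp [hp, hq]
  rw [LinearMap.add_apply, LinearMap.compl₁₂_apply, hy, hyperbolicProj_apply]
  simp

theorem IsHyperbolicFamily.cons {r : ℕ} {w : Fin r × Fin 2 → M} (hB : B.IsAlt)
    (hpq : B p q = 1)
    (hw : IsHyperbolicFamily
      (B.compl₁₂ (hyperbolicProj B p q) (hyperbolicProj B p q)) w) :
    IsHyperbolicFamily B fun k : Fin (r + 1) × Fin 2 =>
      (Fin.cons ![p, q] fun i a => hyperbolicProj B p q (w (i, a)) :
        Fin (r + 1) → Fin 2 → M) k.1 k.2 where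
  apply_eq_zero i j hij a b := by
    have hplane (c : Fin 2) (x : M) : B (![p, q] c) (hyperbolicProj B p q x) = 0 := by
      fin_cases c
      · exact apply_left_hyperbolicProj hB hpq x
      · exact apply_right_hyperbolicProj hB hpq x
    cases i using Fin.cases <;> cases j using Fin.cases
    · exact absurd rfl hij
    · exact hplane _ _
    · exact hB.eq_iff.mp (hplane _ _)
    · exact hw.apply_eq_zero (fun h => hij (congrArg _ h)) a b
  apply_eq_one i := by
    cases i using Fin.cases
    · exact hpq
    · exact hw.apply_eq_one _

end Hyperbolic

section Rank

variable {K V : Type*} [Field K] [AddCommGroup V] [Module K V] {B : V →ₗ[K] V →ₗ[K] K}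

theorem rank_le_rank_compl₁₂_hyperbolicProj_add_two {p q : V} (hB : B.IsAlt) (hpq : B p q = 1) :
    B.rank ≤ (B.compl₁₂ (hyperbolicProj B p q) (hyperbolicProj B p q)).rank + 2 := by
  set C := B.compl₁₂ (hyperbolicProj B p q) (hyperbolicProj B p q)
  have hle : LinearMap.range B ≤ LinearMap.range C ⊔ Submodule.span K {B p, B q} := by
    rintro _ ⟨x, rfl⟩
    rw [eq_compl₁₂_hyperbolicProj_add hB hpq x]
    exact Submodule.add_mem_sup ⟨x, rfl⟩ (Submodule.sub_mem _
      (Submodule.smul_mem _ _ (Submodule.mem_span_of_mem (.inl rfl)))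
      (Submodule.smul_mem _ _ (Submodule.mem_span_of_mem (.inr rfl))))
  calc B.rank ≤ Module.rank K ↥(LinearMap.range C ⊔ Submodule.span K {B p, B q}) :=
      Submodule.rank_mono hle
    _ ≤ C.rank + Module.rank K (Submodule.span K {B p, B q}) :=
      Submodule.rank_add_le_rank_add_rank _ _
    _ ≤ C.rank + 2 := by
      gcongr
      calc Module.rank K (Submodule.span K {B p, B q}) ≤ Cardinal.mk ({B p, B q} : Set _) :=
            rank_span_le _
        _ ≤ Cardinal.mk ({B q} : Set _) + 1 := Cardinal.mk_insert_le
        _ = 2 := by rw [Cardinal.mk_singleton, one_add_one_eq_two]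

theorem exists_apply_eq_one_of_ne_zero (hB : B ≠ 0) : ∃ p q, B p q = 1 := by
  obtain ⟨p, hp⟩ := DFunLike.ne_iff.mp hB
  obtain ⟨q, hq⟩ := DFunLike.ne_iff.mp hp
  exact ⟨p, (B p q)⁻¹ • q, by simpa using inv_mul_cancel₀ hq⟩

theorem exists_isHyperbolicFamily (r : ℕ) (hB : B.IsAlt) (hr : (2 * r : ℕ) ≤ B.rank) :
    ∃ w : Fin r × Fin 2 → V, IsHyperbolicFamily B w := by
  induction r generalizing B with
  | zero => exact ⟨fun k => k.1.elim0, ⟨fun i => i.elim0, fun i => i.elim0⟩⟩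
  | succ r ih =>
    have hB0 : B ≠ 0 := by
      rintro rfl
      simp at hr
    obtain ⟨p, q, hpq⟩ := exists_apply_eq_one_of_ne_zero hB0
    have hrank : (2 * r : ℕ) ≤
        (B.compl₁₂ (hyperbolicProj B p q) (hyperbolicProj B p q)).rank := by
      have h := hr.trans (rank_le_rank_compl₁₂_hyperbolicProj_add_two hB hpq)
      rw [mul_add_one, Nat.cast_add, Nat.cast_ofNat] at h
      exact (Cardinal.add_le_add_iff_of_lt_aleph0 Cardinal.ofNat_lt_aleph0).mp h
    have hBalt : (B.compl₁₂ (hyperbolicProj B p q) (hyperbolicProj B p q)).IsAlt :=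
      fun x => hB.self_eq_zero (hyperbolicProj B p q x)
    obtain ⟨w, hw⟩ := ih hBalt hrank
    exact ⟨_, hw.cons hB hpq⟩

theorem not_linearIndependent_map_of_rank_lt {W κ : Type*} [AddCommGroup W] [Module K W]
    [Fintype κ] (f : V →ₗ[K] W) (hf : f.rank < Fintype.card κ) (w : κ → V) :
    ¬ LinearIndependent K fun k => f (w k) := fun hli => by
  have hli' : LinearIndependent K fun k => f.rangeRestrict (w k) := .of_comp f.range.subtype hli
  have hcard := hli'.cardinal_lift_le_rank
  rw [Cardinal.mk_fintype, Cardinal.lift_natCast, Cardinal.nat_le_lift_iff] at hcard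
  exact hcard.not_gt hf

theorem alternatization_matchingProd_eq_zero_of_rank_lt {ι : Type*} [Fintype ι] [DecidableEq ι]
    (hB : B.IsAlt) (hr : B.rank < (2 * Fintype.card ι : ℕ)) (w : ι × Fin 2 → V) :
    (matchingProd B).alternatization w = 0 := by
  have hdep := not_linearIndependent_map_of_rank_lt (κ := ι × Fin 2) B
    (by rwa [Fintype.card_prod, Fintype.card_fin, mul_comm]) w
  obtain ⟨c, hc, j, hj⟩ := Fintype.not_linearIndependent_iff.mp hdep
  have hker : B (∑ k, c k • w k) = 0 := by simpa using hc
  have hupdate := alternatization_matchingProd_eq_zero_of_apply_eq_zero hB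
    (w := update w j (∑ k, c k • w k)) (k := j) (by rwa [update_self])
  rw [alternatingMap_update_sum_smul] at hupdate
  exact (smul_eq_zero.mp hupdate).resolve_left hj

theorem forall_alternatization_matchingProd_eq_zero_iff [CharZero K] (r : ℕ) (hB : B.IsAlt) :
    (∀ w : Fin r × Fin 2 → V, (matchingProd B).alternatization w = 0) ↔
      B.rank < (2 * r : ℕ) := by
  refine ⟨fun h => ?_, fun h =>
    alternatization_matchingProd_eq_zero_of_rank_lt hB (by rwa [Fintype.card_fin])⟩
  by_contra! hr
  obtain ⟨w, hw⟩ := exists_isHyperbolicFamily r hB hr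
  exact hw.alternatization_matchingProd_ne_zero hB (h w)

end Rank

section KirillovForm

/-- The Kirillov form `(u, v) ↦ κ([x, u], v) = κ([u, v], x)` at `x`, with `κ` the Killing form. -/
noncomputable def kirillovForm (R : Type*) {L : Type*} [CommRing R] [LieRing L] [LieAlgebra R L]
    (x : L) : L →ₗ[R] L →ₗ[R] R :=
  killingForm R L ∘ₗ LieAlgebra.ad R L x

section CommRing

variable {R L : Type*} [CommRing R] [LieRing L] [LieAlgebra R L]

theorem kirillovForm_apply (x u v : L) : kirillovForm R x u v = killingForm R L ⁅u, v⁆ x := by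
  rw [LieModule.traceForm_comm R L L ⁅u, v⁆, ← LieModule.traceForm_apply_lie_apply]
  rfl

theorem isAlt_kirillovForm (x : L) : (kirillovForm R x).IsAlt := fun u => by
  rw [kirillovForm_apply, lie_self, map_zero, LinearMap.zero_apply]

theorem ker_kirillovForm [LieAlgebra.IsKilling R L] (x : L) :
    LinearMap.ker (kirillovForm R x) = LinearMap.ker (LieAlgebra.ad R L x) :=
  LinearMap.ker_comp_of_ker_eq_bot _ (LieAlgebra.IsKilling.ker_killingForm_eq_bot R L)

end CommRing

theorem finrank_range_kirillovForm_add_finrank_ker_ad (K : Type*) {L : Type*} [Field K] [LieRing L]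
    [LieAlgebra K L] [FiniteDimensional K L] [LieAlgebra.IsKilling K L] (x : L) :
    finrank K (LinearMap.range (kirillovForm K x)) +
      finrank K (LinearMap.ker (LieAlgebra.ad K L x)) = finrank K L := by
  rw [← ker_kirillovForm, LinearMap.finrank_range_add_finrank_ker]

end KirillovForm

section GammaVal

/-- The enumeration `(i, a) ↦ 2 * i + a`, under which the standard matching of `Fin r × Fin 2`
becomes `{0, 1}, {2, 3}, …`. -/
def pairEquiv (r : ℕ) : Fin r × Fin 2 ≃ Fin (2 * r) :=
  finProdFinEquiv.trans (finCongr (mul_comm r 2))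

theorem val_pairEquiv {r : ℕ} (i : Fin r) (a : Fin 2) :
    (pairEquiv r (i, a) : ℕ) = 2 * i + a :=
  add_comm _ _

variable {L : Type*} [LieRing L] [LieAlgebra ℂ L] [FiniteDimensional ℂ L]

theorem GammaVal_eq_mul_alternatization (r : ℕ) (w : Fin (2 * r) → L) (x : L) :
    GammaVal r w x = (1 / ((Nat.factorial r : ℂ) * 2 ^ r)) *
      (matchingProd (kirillovForm ℂ x)).alternatization (w ∘ pairEquiv r) := by
  have h0 (i : Fin r) : (⟨2 * i.1, by omega⟩ : Fin (2 * r)) = pairEquiv r (i, 0) :=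
    Fin.ext (val_pairEquiv i 0).symm
  have h1 (i : Fin r) : (⟨2 * i.1 + 1, by omega⟩ : Fin (2 * r)) = pairEquiv r (i, 1) :=
    Fin.ext (val_pairEquiv i 1).symm
  rw [GammaVal, alternatization_matchingProd_apply]
  congr 1
  refine (Fintype.sum_equiv (pairEquiv r).permCongr _ _ fun σ => ?_).symm
  simp only [h0, h1, permCongr_apply, symm_apply_apply, Perm.sign_permCongr, Units.smul_def,
    zsmul_eq_mul, kirillovForm_apply, comp_apply]

theorem forall_GammaVal_eq_zero_iff (r : ℕ) (x : L) :
    (∀ w : Fin (2 * r) → L, GammaVal r w x = 0) ↔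
      finrank ℂ (LinearMap.range (kirillovForm ℂ x)) < 2 * r := by
  have hc : 1 / ((Nat.factorial r : ℂ) * 2 ^ r) ≠ 0 := by
    simp [Nat.factorial_ne_zero]
  have hrank := forall_alternatization_matchingProd_eq_zero_iff r (isAlt_kirillovForm (R := ℂ) x)
  rw [LinearMap.rank, ← finrank_eq_rank, Nat.cast_lt] at hrank
  simp only [GammaVal_eq_mul_alternatization, mul_eq_zero, hc, false_or, ← hrank]
  exact ((pairEquiv r).symm.arrowCongr (.refl L)).forall_congr fun _ => Iff.rfl

end GammaVal

theorem stmt17_general {L : Type*} [LieRing L] [LieAlgebra ℂ L] [FiniteDimensional ℂ L]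
    [LieAlgebra.IsKilling ℂ L] (r : ℕ) (x : L) :
    finrank ℂ L < finrank ℂ (LinearMap.ker (LieAlgebra.ad ℂ L x)) + 2 * r ↔
      ∀ w : Fin (2 * r) → L, GammaVal r w x = 0 := by
  rw [forall_GammaVal_eq_zero_iff, ← finrank_range_kirillovForm_add_finrank_ker_ad ℂ x]
  omega

/-- With `Γ` as above and `M = Γ(⋀^{2r} g) ⊆ S^r(g)` (spanned by the values of `Γ` on
decomposables): an element `x ∈ g` is singular (`dim g^x > rank g = dim H`) if and only
if `f(x) = 0` for all `f ∈ M`, i.e. iff `Γ(w₁ ∧ ⋯ ∧ w_{2r})(x) = 0` for all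
`w₁, …, w_{2r} ∈ g`. -/
theorem stmt17 (L : Type*) [LieRing L] [LieAlgebra ℂ L] [FiniteDimensional ℂ L]
    [LieAlgebra.IsSemisimple ℂ L]
    (H : LieSubalgebra ℂ L) [H.IsCartanSubalgebra]
    (n r : ℕ) (hn : finrank ℂ L = n) (hnr : n = finrank ℂ H + 2 * r) :
    ∀ x : L,
      finrank ℂ H < finrank ℂ (LinearMap.ker (LieAlgebra.ad ℂ L x)) ↔
        ∀ w : Fin (2 * r) → L, GammaVal r w x = 0 := by
  intro x
  rw [← stmt17_general]
  omega
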